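/- arXiv:2604.02462 — 2 statements merged into one kernel-verified Lean document; each statement's English description precedes it below -/
import Mathlib

section
/- Let Ω be a bounded domain in ℂ and let a, b be distinct points of Ω. Then for every M > 0 and every ε > 0 there exist a positive integer N and real coefficients c_{nm} (0 ≤ n, m ≤ N) such that for every harmonic function u : Ω → ℝ with |u(z)| < M for all z ∈ Ω, one has |u(b) − Σ_{0 ≤ n,m ≤ N} c_{nm} (∂^{n+m} u / ∂x^n ∂y^m)(a)| < ε. The integer N and the coefficients c_{nm} depend on Ω, a, b, ε, M but not on u. -/
open MeasureTheory Finset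

/-- Directional (partial) derivative of a real-valued function on `ℂ ≅ ℝ²`
in the direction `v`; `pderivAlong 1` is `∂/∂x` and `pderivAlong I` is `∂/∂y`. -/
noncomputable def pderivAlong (v : ℂ) (u : ℂ → ℝ) : ℂ → ℝ :=
  fun z => fderiv ℝ u z v

/-- `u` is harmonic on `Ω`: twice continuously differentiable (over `ℝ`) on `Ω`
and satisfying `u_xx + u_yy = 0` there. -/
def HarmonicOnSet (u : ℂ → ℝ) (Ω : Set ℂ) : Prop :=
  ContDiffOn ℝ 2 u Ω ∧
    ∀ z ∈ Ω, pderivAlong 1 (pderivAlong 1 u) z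
      + pderivAlong Complex.I (pderivAlong Complex.I u) z = 0

/-!
A bounded family `(uᵢ)` of harmonic functions on `Ω` is a single map `E : z ↦ (uᵢ(z))ᵢ` into the
Banach space of bounded functions of `i`. By the Borel-Carathéodory theorem the local holomorphic
functions with real parts `uᵢ` are bounded uniformly in `i`, so `E` is real analytic. Modulo the
closed span of its derivatives at `a`, the map `E` vanishes near `a`, hence on all of `Ω` by the
identity theorem. So `E b` lies in that closed span, and closeness there is uniform in `i`.
-/

section

open Complex Metric InnerProductSpace Topology BoundedContinuousFunction

section IdentityTheorem

variable {𝕜 G X : Type*} [NontriviallyNormedField 𝕜] [CharZero 𝕜]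
  [NormedAddCommGroup G] [NormedSpace 𝕜 G]
  [NormedAddCommGroup X] [NormedSpace 𝕜 X] [CompleteSpace X]

theorem eventually_mem_of_iteratedFDeriv_mem {f : G → X} {a : G} {V : Submodule 𝕜 X}
    (hf : AnalyticAt 𝕜 f a) (hV : IsClosed (V : Set X))
    (hmem : ∀ n w, iteratedFDeriv 𝕜 n f a (fun _ => w) ∈ V) : ∀ᶠ z in 𝓝 a, f z ∈ V := by
  obtain ⟨p, r, hp⟩ := hf
  filter_upwards [eball_mem_nhds a hp.r_pos] with z hz
  have hsum := hp.hasSum_iteratedFDeriv (y := z - a) (by simpa [edist_eq_enorm_sub] using hz)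
  rw [add_sub_cancel] at hsum
  refine hV.mem_of_tendsto hsum (.of_forall fun s => ?_)
  exact V.sum_mem fun n _ => V.smul_mem _ (hmem n _)

theorem mem_of_isPreconnected_of_iteratedFDeriv_mem {f : G → X} {U : Set G} {a : G}
    {V : Submodule 𝕜 X} (hf : AnalyticOnNhd 𝕜 f U) (hU : IsPreconnected U) (ha : a ∈ U)
    (hV : IsClosed (V : Set X)) (hmem : ∀ n w, iteratedFDeriv 𝕜 n f a (fun _ => w) ∈ V) :
    ∀ z ∈ U, f z ∈ V := by
  have hquot : AnalyticOnNhd 𝕜 (V.mkQL ∘ f) U := V.mkQL.comp_analyticOnNhd hf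
  have hzero : V.mkQL ∘ f =ᶠ[𝓝 a] 0 := by
    filter_upwards [eventually_mem_of_iteratedFDeriv_mem (hf a ha) hV hmem] with z hz
    simpa using hz
  intro z hz
  simpa using hquot.eqOn_zero_of_preconnected_of_eventuallyEq_zero hU ha hzero hz

end IdentityTheorem

section BoundedFamilies

variable {Y : Type*} [NormedAddCommGroup Y] [NormedSpace ℂ Y] [CompleteSpace Y]

theorem norm_taylorCoeff_le {f : ℂ → Y} {c : ℂ} {r C : ℝ} (hr : 0 < r)
    (hf : DiffContOnCl ℂ f (ball c r)) (hC : ∀ z ∈ sphere c r, ‖f z‖ ≤ C) (n : ℕ) :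
    ‖(n.factorial : ℂ)⁻¹ • iteratedDeriv n f c‖ ≤ C / r ^ n := by
  rw [norm_smul, norm_inv, norm_natCast, inv_mul_le_iff₀ (by positivity), ← mul_div_assoc]
  exact norm_iteratedDeriv_le_of_forall_mem_sphere_norm_le n hr hf hC

theorem exists_holomorphic_re_eq_norm_le {u : ℂ → ℝ} {c : ℂ} {R M : ℝ} (hR : 0 < R)
    (hu : HarmonicOnNhd u (ball c R)) (hM : ∀ z ∈ ball c R, |u z| < M) :
    ∃ f : ℂ → ℂ, DifferentiableOn ℂ f (ball c R) ∧ (∀ z ∈ ball c R, u z = (f z).re) ∧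
      ∀ z ∈ closedBall c (R / 2), ‖f z‖ ≤ 5 * M := by
  obtain ⟨F, hF, hFu⟩ := hu.exists_analyticOnNhd_ball_re_eq
  have hc : c ∈ ball c R := mem_ball_self hR
  let f : ℂ → ℂ := fun z => F z - (F c).im * I
  have hf : DifferentiableOn ℂ f (ball c R) := hF.differentiableOn.sub_const _
  have hre : ∀ z ∈ ball c R, u z = (f z).re := fun z hz => by simpa [f] using (hFu hz).symm
  have hfc : f c = u c := Complex.ext (by simp [hre c hc]) (by simp [f])
  have hmaps : Set.MapsTo (c + ·) (ball (0 : ℂ) R) (ball c R) := fun w hw => by simpa using hw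
  refine ⟨f, hf, hre, fun z hz => ?_⟩
  have hzc : ‖z - c‖ ≤ R / 2 := by simpa [dist_eq_norm] using hz
  have hbound := borelCaratheodory (f := fun w => f (c + w)) (z := z - c) (M := M)
    ((abs_nonneg _).trans_lt (hM c hc)) (hf.comp (by fun_prop) hmaps)
    (fun w hw => by
      simpa only [Set.mem_ofPred_eq, ← hre _ (hmaps hw)] using (lt_of_abs_lt (hM _ (hmaps hw))).le)
    hR (by rw [mem_ball_zero_iff]; linarith)
  simp only [add_zero, add_sub_cancel, hfc, norm_real, Real.norm_eq_abs] at hbound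
  refine hbound.trans ?_
  -- For `‖z - c‖ ≤ R / 2` the right-hand side is at most `2 * M + 3 * |u c|`.
  rw [← add_div, div_le_iff₀ (by linarith)]
  nlinarith [hM c hc, norm_nonneg (z - c), abs_nonneg (u c)]

variable {ι : Type*} [TopologicalSpace ι] [DiscreteTopology ι]

-- Cauchy's estimates make the `n`-th Taylor coefficients of the family a bounded function on `ι`,
-- hence the `n`-th coefficient of a power series in `ι →ᵇ Y`.
theorem exists_analyticAt_apply_eq {f : ι → ℂ → Y} {c : ℂ} {r C : ℝ} (hr : 0 < r) (hC₀ : 0 ≤ C)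
    (hf : ∀ i, DiffContOnCl ℂ (f i) (ball c r)) (hC : ∀ i, ∀ z ∈ sphere c r, ‖f i z‖ ≤ C) :
    ∃ F : ℂ → ι →ᵇ Y, AnalyticAt ℂ F c ∧ ∀ z ∈ ball c r, ∀ i, F z i = f i z := by
  let P (n : ℕ) : ι →ᵇ Y := ofNormedAddCommGroupDiscrete
    (fun i => (n.factorial : ℂ)⁻¹ • iteratedDeriv n (f i) c) (C / r ^ n)
    fun i => norm_taylorCoeff_le hr (hf i) (hC i) n
  have hP (n : ℕ) : ‖P n‖ ≤ C / r ^ n :=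
    (norm_le (by positivity)).2 fun i => norm_taylorCoeff_le hr (hf i) (hC i) n
  let p : FormalMultilinearSeries ℂ ℂ (ι →ᵇ Y) := fun n => .mkPiRing ℂ (Fin n) (P n)
  have hrad : ENNReal.ofReal r ≤ p.radius := p.le_radius_of_bound C fun n => by
    rw [ContinuousMultilinearMap.norm_mkPiRing, Real.coe_toNNReal r hr.le,
      ← le_div_iff₀ (by positivity)]
    exact hP n
  have hp : HasFPowerSeriesOnBall (fun z => p.sum (z - c)) p c p.radius := by
    simpa using (p.hasFPowerSeriesOnBall ((ENNReal.ofReal_pos.2 hr).trans_le hrad)).comp_sub c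
  refine ⟨_, hp.analyticAt, fun z hz i => ?_⟩
  have hsum := hp.hasSum_sub (y := z) (eball_subset_eball hrad (by rwa [eball_ofReal]))
  refine ((evalCLM ℂ i).hasSum hsum).unique ?_
  convert! hasSum_taylorSeries_on_ball (hf i).differentiableOn hz using 2 with n
  simp [p, P, smul_smul, mul_comm]

theorem analyticAt_of_harmonicOnNhd_apply {E : ℂ → ι →ᵇ ℝ} {u : ι → ℂ → ℝ} {c : ℂ} {R M : ℝ}
    (hR : 0 < R) (hM₀ : 0 < M) (hu : ∀ i, HarmonicOnNhd (u i) (ball c R))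
    (hM : ∀ i, ∀ z ∈ ball c R, |u i z| < M) (hEu : ∀ z ∈ ball c R, ∀ i, E z i = u i z) :
    AnalyticAt ℝ E c := by
  choose f hf hre hbound using fun i => exists_holomorphic_re_eq_norm_le hR (hu i) (hM i)
  obtain ⟨F, hF, hFf⟩ := exists_analyticAt_apply_eq (half_pos hR) (by positivity : 0 ≤ 5 * M)
    (fun i => ((hf i).mono (closedBall_subset_ball (half_lt_self hR))).diffContOnCl_ball subset_rfl)
    (fun i z hz => hbound i z (sphere_subset_closedBall hz))
  have hreF := ((reCLM.compLeftContinuousBounded ι).analyticAt _).comp hF.restrictScalars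
  refine hreF.congr ?_
  filter_upwards [ball_mem_nhds c (half_pos hR)] with z hz
  have hzR : z ∈ ball c R := ball_subset_ball (half_le_self hR.le) hz
  ext i
  simp [hFf z hz i, hEu z hzR i, hre i z hzR]

theorem exists_analyticOnNhd_apply_eq {u : ι → ℂ → ℝ} {Ω : Set ℂ} {M : ℝ} (hΩ : IsOpen Ω)
    (hM₀ : 0 < M) (hu : ∀ i, HarmonicOnNhd (u i) Ω) (hM : ∀ i, ∀ z ∈ Ω, |u i z| < M) :
    ∃ E : ℂ → ι →ᵇ ℝ, AnalyticOnNhd ℝ E Ω ∧ ∀ z ∈ Ω, ∀ i, E z i = u i z := by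
  have hbound (z : ℂ) (i : ι) : ‖Ω.indicator (u i) z‖ ≤ M := by
    by_cases hz : z ∈ Ω
    · simpa [hz] using (hM i z hz).le
    · simpa [hz] using hM₀.le
  let E (z : ℂ) : ι →ᵇ ℝ := ofNormedAddCommGroupDiscrete _ M (hbound z)
  have hEu : ∀ z ∈ Ω, ∀ i, E z i = u i z := fun z hz i => Set.indicator_of_mem hz (u i)
  refine ⟨E, fun c hc => ?_, hEu⟩
  obtain ⟨R, hR, hball⟩ := isOpen_iff.1 hΩ c hc
  exact analyticAt_of_harmonicOnNhd_apply hR hM₀ (fun i => (hu i).mono hball)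
    (fun i z hz => hM i z (hball hz)) (fun z hz => hEu z (hball hz))

end BoundedFamilies

section Jets

theorem iteratedFDeriv_apply_const {u : ℂ → ℝ} {z : ℂ} {n : ℕ} (hu : ContDiffAt ℝ n u z) (w : ℂ) :
    iteratedFDeriv ℝ n u z (fun _ => w) = (pderivAlong w)^[n] u z := by
  induction n generalizing u with
  | zero => simp
  | succ n ih =>
    have hfderiv : ContDiffAt ℝ n (fderiv ℝ u) z := hu.fderiv_right (by simp)
    have happly := (ContinuousLinearMap.apply ℝ ℝ w).iteratedFDeriv_comp_left hfderiv le_rfl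
    have hpderiv : ContDiffAt ℝ n (pderivAlong w u) z := hfderiv.clm_apply contDiffAt_const
    rw [Function.iterate_succ_apply, ← ih hpderiv, iteratedFDeriv_succ_apply_right]
    exact (DFunLike.congr_fun happly fun _ => w).symm

theorem HarmonicOnSet.harmonicOnNhd {u : ℂ → ℝ} {Ω : Set ℂ} (h : HarmonicOnSet u Ω)
    (hΩ : IsOpen Ω) : HarmonicOnNhd u Ω := by
  have hsmooth : ∀ z ∈ Ω, ContDiffAt ℝ 2 u z := fun z hz => h.1.contDiffAt (hΩ.mem_nhds hz)
  refine fun z hz => ⟨hsmooth z hz, ?_⟩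
  filter_upwards [hΩ.mem_nhds hz] with y hy
  have hsecond (v : ℂ) :
      pderivAlong v (pderivAlong v u) y = fderiv ℝ (fderiv ℝ u) y v v := by
    simpa [iteratedFDeriv_two_apply] using (iteratedFDeriv_apply_const (hsmooth y hy) v).symm
  simpa [laplacian_eq_iteratedFDeriv_complexPlane, iteratedFDeriv_two_apply, hsecond]
    using h.2 y hy

theorem pderivAlong_eq_re {u : ℂ → ℝ} {f : ℂ → ℂ} {z : ℂ} (hf : DifferentiableAt ℂ f z)
    (h : u =ᶠ[𝓝 z] fun y => (f y).re) (v : ℂ) : pderivAlong v u z = (v * deriv f z).re := by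
  have hre := reCLM.hasFDerivAt.comp z (hf.hasDerivAt.hasFDerivAt.restrictScalars ℝ)
  rw [pderivAlong, (hre.congr_of_eventuallyEq h).fderiv]
  simp

theorem iterate_pderivAlong_eventuallyEq_re {u : ℂ → ℝ} {f : ℂ → ℂ} {z : ℂ}
    (hf : AnalyticAt ℂ f z) (h : u =ᶠ[𝓝 z] fun y => (f y).re) (v : ℂ) (n : ℕ) :
    (pderivAlong v)^[n] u =ᶠ[𝓝 z] fun y => (v ^ n * iteratedDeriv n f y).re := by
  induction n with
  | zero => simpa using h
  | succ n ih =>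
    filter_upwards [ih.eventuallyEq_nhds, hf.eventually_analyticAt] with y hy hfy
    have hd : DifferentiableAt ℂ (iteratedDeriv n f) y := by
      rw [iteratedDeriv_eq_iterate]
      exact (hfy.iterated_deriv n).differentiableAt
    rw [Function.iterate_succ_apply', pderivAlong_eq_re (hd.const_mul _) hy, deriv_const_mul _ hd,
      iteratedDeriv_succ, pow_succ', mul_assoc]

theorem exists_analyticAt_re_eventuallyEq {u : ℂ → ℝ} {a : ℂ} (hu : HarmonicAt u a) :
    ∃ f : ℂ → ℂ, AnalyticAt ℂ f a ∧ u =ᶠ[𝓝 a] fun z => (f z).re := by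
  obtain ⟨R, hR, hball⟩ := eventually_nhds_iff_ball.1 hu.eventually
  obtain ⟨f, hf, hre⟩ := HarmonicOnNhd.exists_analyticOnNhd_ball_re_eq hball
  exact ⟨f, hf a (mem_ball_self hR), (hre.eventuallyEq_of_mem (ball_mem_nhds a hR)).symm⟩

theorem iterate_pderivAlong_succ_eq {u : ℂ → ℝ} {a : ℂ} (hu : HarmonicAt u a) (w : ℂ) (n : ℕ) :
    (pderivAlong w)^[n + 1] u a = (w ^ (n + 1)).re * (pderivAlong 1)^[n + 1] u a +
      (w ^ (n + 1)).im * (pderivAlong 1)^[n] (pderivAlong I u) a := by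
  obtain ⟨f, hf, hre⟩ := exists_analyticAt_re_eventuallyEq hu
  have hI : pderivAlong I u =ᶠ[𝓝 a] fun z => (I * deriv f z).re := by
    simpa using iterate_pderivAlong_eventuallyEq_re hf hre I 1
  have hmixed : (pderivAlong 1)^[n] (pderivAlong I u) a = -(iteratedDeriv (n + 1) f a).im := by
    have hdf : AnalyticAt ℂ (fun z => I * deriv f z) a := analyticAt_const.mul hf.deriv
    rw [(iterate_pderivAlong_eventuallyEq_re hdf hI 1 n).eq_of_nhds,
      iteratedDeriv_const_mul_field, ← iteratedDeriv_succ']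
    simp
  rw [hmixed, (iterate_pderivAlong_eventuallyEq_re hf hre w (n + 1)).eq_of_nhds,
    (iterate_pderivAlong_eventuallyEq_re hf hre 1 (n + 1)).eq_of_nhds, one_pow, one_mul, mul_re]
  ring

variable {ι : Type*}

/-- The span, in the functions on the index set of a family `u`, of the partial derivatives
`∂ⁿ⁺ᵐ uᵢ / ∂xⁿ ∂yᵐ` at `a`. Its elements are the quantities that a finite linear combination of
derivatives at `a`, with coefficients independent of `i`, can measure. -/
def jetSpan (u : ι → ℂ → ℝ) (a : ℂ) : Submodule ℝ (ι → ℝ) :=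
  Submodule.span ℝ (Set.range fun (q : ℕ × ℕ) i =>
    (pderivAlong 1)^[q.1] ((pderivAlong I)^[q.2] (u i)) a)

theorem iterate_pderivAlong_mem_jetSpan {u : ι → ℂ → ℝ} {a : ℂ} (hu : ∀ i, HarmonicAt (u i) a)
    (w : ℂ) (n : ℕ) : (fun i => (pderivAlong w)^[n] (u i) a) ∈ jetSpan u a := by
  cases n with
  | zero => exact Submodule.subset_span ⟨(0, 0), rfl⟩
  | succ n =>
    rw [funext fun i => iterate_pderivAlong_succ_eq (hu i) w n]
    exact add_mem (Submodule.smul_mem _ _ (Submodule.subset_span ⟨(n + 1, 0), rfl⟩))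
      (Submodule.smul_mem _ _ (Submodule.subset_span ⟨(n, 1), rfl⟩))

theorem exists_coeff_of_mem_jetSpan {u : ι → ℂ → ℝ} {a : ℂ} {φ : ι → ℝ}
    (hφ : φ ∈ jetSpan u a) : ∃ N : ℕ, 0 < N ∧ ∃ c : ℕ → ℕ → ℝ, ∀ i,
      φ i = ∑ n ∈ Finset.range (N + 1), ∑ m ∈ Finset.range (N + 1),
        c n m * (pderivAlong 1)^[n] ((pderivAlong I)^[m] (u i)) a := by
  obtain ⟨c, rfl⟩ := Finsupp.mem_span_range_iff_exists_finsupp.1 hφ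
  obtain ⟨⟨k, l⟩, hkl⟩ := c.support.bddAbove
  let N := max k l + 1
  have hsupport : c.support ⊆ Finset.range (N + 1) ×ˢ Finset.range (N + 1) := fun q hq => by
    have hq₁ : q.1 ≤ k := (hkl hq).1
    have hq₂ : q.2 ≤ l := (hkl hq).2
    simp only [Finset.mem_product, Finset.mem_range]
    omega
  refine ⟨N, by omega, fun n m => c (n, m), fun i => ?_⟩
  rw [← Finset.sum_product', Finsupp.sum_of_support_subset c hsupport _ (by simp),
    Finset.sum_apply]
  rfl

theorem iteratedFDeriv_apply_mem_jetSpan [TopologicalSpace ι] {E : ℂ → ι →ᵇ ℝ} {u : ι → ℂ → ℝ}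
    {a : ℂ} (hE : AnalyticAt ℝ E a) (hu : ∀ i, HarmonicAt (u i) a)
    (hEu : ∀ᶠ z in 𝓝 a, ∀ i, E z i = u i z) (n : ℕ) (w : ℂ) :
    ⇑(iteratedFDeriv ℝ n E a fun _ => w) ∈ jetSpan u a := by
  convert! iterate_pderivAlong_mem_jetSpan hu w n using 2 with i
  have hcoord : evalCLM ℝ i ∘ E =ᶠ[𝓝 a] u i := hEu.mono fun z hz => hz i
  rw [← iteratedFDeriv_apply_const (HarmonicAt.analyticAt (hu i)).contDiffAt,
    ← (hcoord.iteratedFDeriv ℝ n).eq_of_nhds,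
    (evalCLM ℝ i).iteratedFDeriv_comp_left hE.contDiffAt le_rfl]
  rfl

theorem exists_mem_jetSpan_abs_sub_lt {u : ι → ℂ → ℝ} {Ω : Set ℂ} {a b : ℂ} {M ε : ℝ}
    (hΩ : IsOpen Ω) (hΩconn : IsPreconnected Ω) (ha : a ∈ Ω) (hb : b ∈ Ω) (hM₀ : 0 < M)
    (hε : 0 < ε) (hu : ∀ i, HarmonicOnNhd (u i) Ω) (hM : ∀ i, ∀ z ∈ Ω, |u i z| < M) :
    ∃ φ ∈ jetSpan u a, ∀ i, |u i b - φ i| < ε := by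
  let _ : TopologicalSpace ι := ⊥
  have : DiscreteTopology ι := ⟨rfl⟩
  obtain ⟨E, hE, hEu⟩ := exists_analyticOnNhd_apply_eq hΩ hM₀ hu hM
  let V : Submodule ℝ (ι →ᵇ ℝ) := (jetSpan u a).comap
    (ContinuousMap.coeFnLinearMap ℝ ∘ₗ toContinuousMapLinearMap ι ℝ ℝ)
  have hjets (n : ℕ) (w : ℂ) : iteratedFDeriv ℝ n E a (fun _ => w) ∈ V :=
    iteratedFDeriv_apply_mem_jetSpan (hE a ha) (fun i => hu i a ha)
      (Filter.eventually_of_mem (hΩ.mem_nhds ha) hEu) n w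
  have hEb : E b ∈ V.topologicalClosure :=
    mem_of_isPreconnected_of_iteratedFDeriv_mem hE hΩconn ha V.isClosed_topologicalClosure
      (fun n w => V.le_topologicalClosure (hjets n w)) b hb
  obtain ⟨ψ, hψ, hdist⟩ := mem_closure_iff.1 hEb ε hε
  refine ⟨ψ, hψ, fun i => ?_⟩
  rw [← hEu b hb i]
  exact (dist_coe_le_dist i).trans_lt hdist

end Jets

end

theorem remote_temperature_sensing_general
    (Ω : Set ℂ) (hΩopen : IsOpen Ω) (hΩconn : IsPreconnected Ω)
    (a b : ℂ) (ha : a ∈ Ω) (hb : b ∈ Ω) (M ε : ℝ) (hM : 0 < M) (hε : 0 < ε) :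
    ∃ N : ℕ, 0 < N ∧ ∃ c : ℕ → ℕ → ℝ,
      ∀ u : ℂ → ℝ, HarmonicOnSet u Ω → (∀ z ∈ Ω, |u z| < M) →
        |u b - ∑ n ∈ Finset.range (N + 1), ∑ m ∈ Finset.range (N + 1),
            c n m * (pderivAlong 1)^[n] ((pderivAlong Complex.I)^[m] u) a| < ε := by
  let H : Set (ℂ → ℝ) := {u | HarmonicOnSet u Ω ∧ ∀ z ∈ Ω, |u z| < M}
  obtain ⟨φ, hφ, hlt⟩ := exists_mem_jetSpan_abs_sub_lt (u := fun u : H => u) hΩopen hΩconn ha hb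
    hM hε (fun u => u.2.1.harmonicOnNhd hΩopen) (fun u => u.2.2)
  obtain ⟨N, hN, c, hc⟩ := exists_coeff_of_mem_jetSpan hφ
  exact ⟨N, hN, c, fun u hu huM => hc ⟨u, hu, huM⟩ ▸ hlt ⟨u, hu, huM⟩⟩

/-- Remote temperature sensing: on a bounded domain `Ω ⊆ ℂ` with distinct points
`a, b ∈ Ω`, for any `M > 0` and `ε > 0` there are `N` and real coefficients
`c n m` (`0 ≤ n, m ≤ N`), independent of `u`, such that every harmonic `u` on `Ω`
bounded by `M` satisfies
`|u(b) − Σ_{n,m ≤ N} c_{nm} ∂^{n+m}u/∂x^n∂y^m (a)| < ε`. -/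
theorem remote_temperature_sensing
    (Ω : Set ℂ) (hΩopen : IsOpen Ω) (hΩconn : IsConnected Ω)
    (hΩbdd : Bornology.IsBounded Ω)
    (a b : ℂ) (ha : a ∈ Ω) (hb : b ∈ Ω) (hab : a ≠ b)
    (M ε : ℝ) (hM : 0 < M) (hε : 0 < ε) :
    ∃ N : ℕ, 0 < N ∧ ∃ c : ℕ → ℕ → ℝ,
      ∀ u : ℂ → ℝ, HarmonicOnSet u Ω → (∀ z ∈ Ω, |u z| < M) →
        |u b - ∑ n ∈ Finset.range (N + 1), ∑ m ∈ Finset.range (N + 1),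
            c n m * (pderivAlong 1)^[n] ((pderivAlong Complex.I)^[m] u) a| < ε :=
  remote_temperature_sensing_general Ω hΩopen hΩconn.isPreconnected a b ha hb M ε hM hε
end

section
/- Let Ω be a bounded domain in ℂ and let a, b ∈ Ω. Then for every ε > 0 there exist a positive integer N and complex constants c_0, …, c_N such that for every holomorphic function h on Ω that is square-integrable with respect to Lebesgue area measure on Ω, one has |h(b) − Σ_{m=0}^N \bar{c}_m h^{(m)}(a)| ≤ ε · (∫_Ω |h|² dA)^{1/2}. (An 'approximate null quadrature identity'.) -/
open MeasureTheory Finset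

/-!
Point evaluations on a Bergman space are locally uniformly bounded by the mean value property, so
`z ↦ δ_z` is a holomorphic map from `Ω` into the bounded operators. Modulo the closed span of its
derivatives at `a`, which are the functionals `h ↦ h^{(m)}(a)`, this map has vanishing Taylor series
at `a`, hence is zero on all of `Ω` by the identity theorem. Thus `δ_b` is a norm limit of finite
combinations of the `h ↦ h^{(m)}(a)`.
-/

section MeanValue

open Metric Topology
open scoped ENNReal Real

variable {E : Type*} [NormedAddCommGroup E]

theorem add_polarCoord_symm_eq_circleMap (c : ℂ) (p : ℝ × ℝ) :
    c + Complex.polarCoord.symm p = circleMap c p.1 p.2 := by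
  rw [Complex.polarCoord_symm_apply, circleMap, Complex.exp_mul_I,
    ← Complex.ofReal_cos, ← Complex.ofReal_sin]

theorem circleMap_mem_closedBall_iff {c : ℂ} {r s θ : ℝ} (hs : 0 ≤ s) :
    circleMap c s θ ∈ closedBall c r ↔ s ≤ r := by
  simp [circleMap, abs_of_nonneg hs]

theorem setIntegral_closedBall_eq_integral_polarCoord [NormedSpace ℝ E] (f : ℂ → E) (c : ℂ)
    (r : ℝ) :
    ∫ z in closedBall c r, f z =
      ∫ p in Set.Ioc 0 r ×ˢ Set.Ioo (-π) π, p.1 • f (circleMap c p.1 p.2) := by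
  have indicator_polar : Set.EqOn
      (fun p : ℝ × ℝ ↦ p.1 • (closedBall c r).indicator f (circleMap c p.1 p.2))
      ((Set.Iic r ×ˢ Set.univ).indicator fun p ↦ p.1 • f (circleMap c p.1 p.2))
      polarCoord.target := by
    intro p hp
    have hmem : circleMap c p.1 p.2 ∈ closedBall c r ↔ p ∈ Set.Iic r ×ˢ (Set.univ : Set ℝ) := by
      simpa using circleMap_mem_closedBall_iff (le_of_lt hp.1)
    by_cases h : p ∈ Set.Iic r ×ˢ (Set.univ : Set ℝ)
    · simp only [Set.indicator_of_mem h, Set.indicator_of_mem (hmem.2 h)]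
    · simp only [Set.indicator_of_notMem h, Set.indicator_of_notMem (mt hmem.1 h), smul_zero]
  have rectangle : polarCoord.target ∩ Set.Iic r ×ˢ Set.univ = Set.Ioc 0 r ×ˢ Set.Ioo (-π) π := by
    rw [polarCoord_target, Set.prod_inter_prod, Set.Ioi_inter_Iic, Set.inter_univ]
  calc ∫ z in closedBall c r, f z
      = ∫ z, (closedBall c r).indicator f (c + z) := by
        rw [integral_add_left_eq_self, integral_indicator isClosed_closedBall.measurableSet]
    _ = ∫ p in polarCoord.target, p.1 • (closedBall c r).indicator f (circleMap c p.1 p.2) := by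
        simp only [← Complex.integral_comp_polarCoord_symm, add_polarCoord_symm_eq_circleMap]
    _ = ∫ p in Set.Ioc 0 r ×ˢ Set.Ioo (-π) π, p.1 • f (circleMap c p.1 p.2) := by
        rw [setIntegral_congr_fun polarCoord.open_target.measurableSet indicator_polar,
          setIntegral_indicator (measurableSet_Iic.prod .univ), rectangle]

theorem integral_Ioo_circleMap_eq_smul_circleAverage [NormedSpace ℝ E] (f : ℂ → E) (c : ℂ)
    (s : ℝ) :
    ∫ θ in Set.Ioo (-π) π, f (circleMap c s θ) = (2 * π) • Real.circleAverage f c s := by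
  rw [Real.circleAverage_eq_integral_add (-π), smul_inv_smul₀ Real.two_pi_pos.ne',
    intervalIntegral.integral_comp_add_right (fun θ ↦ f (circleMap c s θ)), zero_add,
    show 2 * π + -π = π by ring, ← integral_Ioc_eq_integral_Ioo,
    intervalIntegral.integral_of_le (by linarith [Real.pi_pos])]

theorem setIntegral_closedBall_eq_integral_circleAverage [NormedSpace ℝ E] {f : ℂ → E} {c : ℂ}
    {r : ℝ} (hr : 0 ≤ r) (hf : ContinuousOn f (closedBall c r)) :
    ∫ z in closedBall c r, f z = ∫ s in (0 : ℝ)..r, s • (2 * π) • Real.circleAverage f c s := by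
  have integrable : IntegrableOn (fun p : ℝ × ℝ ↦ p.1 • f (circleMap c p.1 p.2))
      (Set.Ioc 0 r ×ˢ Set.Ioo (-π) π) (volume.prod volume) := by
    refine (ContinuousOn.integrableOn_compact (isCompact_Icc.prod isCompact_Icc) ?_).mono_set
      (Set.prod_mono Set.Ioc_subset_Icc_self Set.Ioo_subset_Icc_self)
    refine continuousOn_fst.smul (hf.comp (by unfold circleMap; fun_prop) ?_)
    exact fun p hp ↦ (circleMap_mem_closedBall_iff hp.1.1).2 hp.1.2
  calc ∫ z in closedBall c r, f z
      = ∫ s in Set.Ioc 0 r, ∫ θ in Set.Ioo (-π) π, s • f (circleMap c s θ) := by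
        rw [setIntegral_closedBall_eq_integral_polarCoord]
        exact setIntegral_prod _ integrable
    _ = ∫ s in (0 : ℝ)..r, s • (2 * π) • Real.circleAverage f c s := by
        simp only [integral_smul, integral_Ioo_circleMap_eq_smul_circleAverage,
          intervalIntegral.integral_of_le hr]

variable [NormedSpace ℂ E] [CompleteSpace E]

theorem setAverage_closedBall_eq_of_diffContOnCl {f : ℂ → E} {c : ℂ} {r : ℝ} (hr : 0 < r)
    (hf : DiffContOnCl ℂ f (ball c r)) : ⨍ z in closedBall c r, f z = f c := by
  have circleAverage_eq : ∀ s ∈ Set.uIcc 0 r, Real.circleAverage f c s = f c := by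
    intro s hs
    rw [Set.uIcc_of_le hr.le] at hs
    refine DiffContOnCl.circleAverage (hf.mono (ball_subset_ball ?_))
    rw [abs_of_nonneg hs.1]
    exact hs.2
  have integral_eq : ∫ z in closedBall c r, f z = (π * r ^ 2) • f c := calc
    _ = ∫ s in (0 : ℝ)..r, s • (2 * π) • f c := by
      rw [setIntegral_closedBall_eq_integral_circleAverage hr.le hf.continuousOn_ball]
      exact intervalIntegral.integral_congr fun s hs ↦ by simp only [circleAverage_eq s hs]
    _ = (π * r ^ 2) • f c := by
      rw [intervalIntegral.integral_smul_const, integral_id, smul_smul]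
      congr 1
      ring
  have volume_eq : volume.real (closedBall c r) = π * r ^ 2 := by
    simp [Measure.real, Complex.volume_closedBall, hr.le, mul_comm]
  rw [setAverage_eq, integral_eq, volume_eq, inv_smul_smul₀ (by positivity)]

theorem enorm_le_mul_eLpNorm_of_closedBall_subset {f : ℂ → E} {Ω : Set ℂ} {c : ℂ} {r : ℝ}
    {p : ℝ≥0∞} (hp : 1 ≤ p) (hf : DifferentiableOn ℂ f Ω) (hr : 0 < r)
    (hΩ : closedBall c r ⊆ Ω) :
    ‖f c‖ₑ ≤ (volume (closedBall c r))⁻¹ ^ (1 / p).toReal * eLpNorm f p (volume.restrict Ω) := by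
  set B := closedBall c r
  have volume_ne_top : volume B ≠ ∞ := measure_closedBall_lt_top.ne
  have : IsProbabilityMeasure (ProbabilityTheory.cond volume B) :=
    ProbabilityTheory.cond_isProbabilityMeasure_of_finite
      (measure_closedBall_pos volume c hr).ne' volume_ne_top
  have measurable : AEStronglyMeasurable f (volume.restrict B) :=
    (hf.continuousOn.mono hΩ).aestronglyMeasurable isClosed_closedBall.measurableSet
  calc ‖f c‖ₑ
      = ‖∫ z, f z ∂ProbabilityTheory.cond volume B‖ₑ := by
        rw [← setAverage_closedBall_eq_of_diffContOnCl hr (hf.diffContOnCl_ball hΩ), setAverage_eq',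
          ProbabilityTheory.cond]
    _ ≤ eLpNorm f 1 (ProbabilityTheory.cond volume B) := by
        rw [eLpNorm_one_eq_lintegral_enorm]
        exact enorm_integral_le_lintegral_enorm f
    _ ≤ eLpNorm f p (ProbabilityTheory.cond volume B) :=
        eLpNorm_le_eLpNorm_of_exponent_le hp (measurable.smul_measure _)
    _ = (volume B)⁻¹ ^ (1 / p).toReal * eLpNorm f p (volume.restrict B) := by
        rw [ProbabilityTheory.cond, eLpNorm_smul_measure_of_ne_zero
          (ENNReal.inv_ne_zero.2 volume_ne_top), smul_eq_mul]
    _ ≤ (volume B)⁻¹ ^ (1 / p).toReal * eLpNorm f p (volume.restrict Ω) := by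
        gcongr

theorem exists_eventually_norm_le_mul_lpNorm {Ω : Set ℂ} {p : ℝ≥0∞} {z : ℂ}
    (hΩ : IsOpen Ω) (hp : 1 ≤ p) (hz : z ∈ Ω) :
    ∃ C : ℝ, ∀ᶠ w in 𝓝 z, ∀ f : ℂ → E, DifferentiableOn ℂ f Ω → MemLp f p (volume.restrict Ω) →
      ‖f w‖ ≤ C * lpNorm f p (volume.restrict Ω) := by
  obtain ⟨r, hr, hball⟩ := nhds_basis_closedBall.mem_iff.1 (hΩ.mem_nhds hz)
  refine ⟨((volume (closedBall (0 : ℂ) (r / 2)))⁻¹ ^ (1 / p).toReal).toReal, ?_⟩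
  filter_upwards [ball_mem_nhds z (half_pos hr)] with w hw f hf hfp
  have closedBall_subset : closedBall w (r / 2) ⊆ Ω :=
    (closedBall_subset_closedBall' (by linarith [mem_ball.1 hw])).trans hball
  have enorm_le := enorm_le_mul_eLpNorm_of_closedBall_subset hp hf (half_pos hr) closedBall_subset
  rw [Measure.addHaar_closedBall_center] at enorm_le
  have const_ne_top : (volume (closedBall (0 : ℂ) (r / 2)))⁻¹ ^ (1 / p).toReal ≠ ∞ :=
    ENNReal.rpow_ne_top_of_nonneg ENNReal.toReal_nonneg
      (ENNReal.inv_ne_top.2 (measure_closedBall_pos volume 0 (half_pos hr)).ne')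
  rw [← toReal_enorm, ← toReal_eLpNorm hfp.aestronglyMeasurable, ← ENNReal.toReal_mul]
  exact ENNReal.toReal_mono (ENNReal.mul_ne_top const_ne_top hfp.eLpNorm_ne_top) enorm_le

end MeanValue

section WeakHolomorphy

open Filter Metric Topology
open scoped NNReal Real

variable {V E : Type*} [NormedAddCommGroup V] [NormedSpace ℂ V]
  [NormedAddCommGroup E] [NormedSpace ℂ E] {F : ℂ → V →L[ℂ] E} {U : Set ℂ}

theorem norm_sub_le_of_forall_differentiableOn_apply {c z : ℂ} {R M : ℝ}
    (hF : ∀ v, DifferentiableOn ℂ (F · v) (ball c R)) (hM : ∀ w ∈ ball c R, ‖F w‖ ≤ M)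
    (hz : z ∈ ball c R) : ‖F z - F c‖ ≤ 2 * M / R * dist z c := by
  have hR : 0 < R := pos_of_mem_ball hz
  have hM₀ : 0 ≤ M := (norm_nonneg _).trans (hM z hz)
  refine ContinuousLinearMap.opNorm_le_bound _ (by positivity) fun v ↦ ?_
  have maps_closedBall : Set.MapsTo (F · v) (ball c R) (closedBall (F c v) (2 * M * ‖v‖)) := by
    intro w hw
    calc dist (F w v) (F c v)
        ≤ ‖F w v‖ + ‖F c v‖ := dist_le_norm_add_norm _ _
      _ ≤ M * ‖v‖ + M * ‖v‖ :=
        add_le_add ((F w).le_of_opNorm_le (hM w hw) v)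
          ((F c).le_of_opNorm_le (hM c (mem_ball_self hR)) v)
      _ = 2 * M * ‖v‖ := by ring
  calc ‖(F z - F c) v‖
      = dist (F z v) (F c v) := by rw [sub_apply, dist_eq_norm]
    _ ≤ 2 * M * ‖v‖ / R * dist z c :=
      Complex.dist_le_div_mul_dist_of_mapsTo_ball (hF v) maps_closedBall hz
    _ = 2 * M / R * dist z c * ‖v‖ := by ring

theorem continuousOn_of_forall_differentiableOn_apply (hU : IsOpen U)
    (hF : ∀ v, DifferentiableOn ℂ (F · v) U)
    (hbdd : ∀ z ∈ U, (𝓝 z).IsBoundedUnder (· ≤ ·) fun w ↦ ‖F w‖) : ContinuousOn F U := by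
  intro c hc
  obtain ⟨M, hM⟩ := hbdd c hc
  obtain ⟨R, hR, hball⟩ := Metric.eventually_nhds_iff_ball.1
    ((eventually_map.1 hM).and (hU.mem_nhds hc))
  refine ContinuousAt.continuousWithinAt (tendsto_iff_norm_sub_tendsto_zero.2 ?_)
  have tendsto_bound : Tendsto (fun z ↦ 2 * M / R * dist z c) (𝓝 c) (𝓝 0) :=
    Continuous.tendsto' (by fun_prop) _ _ (by simp)
  refine squeeze_zero' (.of_forall fun _ ↦ norm_nonneg _) ?_ tendsto_bound
  filter_upwards [ball_mem_nhds c hR] with z hz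
  exact norm_sub_le_of_forall_differentiableOn_apply
    (fun v ↦ (hF v).mono fun w hw ↦ (hball w hw).2) (fun w hw ↦ (hball w hw).1) hz

theorem circleIntegral_apply [CompleteSpace E] {c : ℂ} {R : ℝ} (hF : CircleIntegrable F c R)
    (v : V) : (∮ z in C(c, R), F z) v = ∮ z in C(c, R), F z v :=
  ((ContinuousLinearMap.apply ℂ E v).intervalIntegral_comp_comm hF.out).symm

theorem differentiableOn_of_forall_differentiableOn_apply [CompleteSpace E] (hU : IsOpen U)
    (hF : ∀ v, DifferentiableOn ℂ (F · v) U)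
    (hbdd : ∀ z ∈ U, (𝓝 z).IsBoundedUnder (· ≤ ·) fun w ↦ ‖F w‖) : DifferentiableOn ℂ F U := by
  intro c hc
  obtain ⟨R, hR, hball⟩ := nhds_basis_closedBall.mem_iff.1 (hU.mem_nhds hc)
  lift R to ℝ≥0 using hR.le
  have continuousOn_sphere : ContinuousOn F (sphere c R) :=
    (continuousOn_of_forall_differentiableOn_apply hU hF hbdd).mono
      (sphere_subset_closedBall.trans hball)
  have cauchy_integral : ∀ w ∈ ball c R,
      (2 * π * Complex.I : ℂ)⁻¹ • (∮ z in C(c, R), (z - w)⁻¹ • F z) = F w := by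
    intro w hw
    ext v
    have integrand_continuousOn : ContinuousOn (fun z ↦ (z - w)⁻¹ • F z) (sphere c R) := by
      refine ((continuousOn_id.sub continuousOn_const).inv₀ fun z hz ↦ ?_).smul continuousOn_sphere
      exact sub_ne_zero.2 (ne_of_mem_of_not_mem hz fun h ↦ (mem_ball.1 hw).ne (mem_sphere.1 h))
    have apply_integral : (∮ z in C(c, R), (z - w)⁻¹ • F z) v =
        ∮ z in C(c, R), (z - w)⁻¹ • F z v :=
      circleIntegral_apply (integrand_continuousOn.circleIntegrable R.2) v
    rw [smul_apply, apply_integral]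
    exact ((hF v).diffContOnCl_ball hball).two_pi_i_inv_smul_circleIntegral_sub_inv_smul hw
  have analytic :=
    (hasFPowerSeriesOn_cauchy_integral (continuousOn_sphere.circleIntegrable R.2) hR).analyticAt
  refine (analytic.differentiableAt.congr_of_eventuallyEq ?_).differentiableWithinAt
  filter_upwards [ball_mem_nhds c hR] with w hw using (cauchy_integral w hw).symm

end WeakHolomorphy

section DerivativeSpan

open Topology

theorem exists_eq_sum_range_smul_of_mem_span_range {R M : Type*} [Semiring R] [AddCommMonoid M]
    [Module R M] {v : ℕ → M} {x : M} (hx : x ∈ Submodule.span R (Set.range v)) :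
    ∃ N, 0 < N ∧ ∃ c : ℕ → R, x = ∑ m ∈ range (N + 1), c m • v m := by
  obtain ⟨c, rfl⟩ := Finsupp.mem_span_range_iff_exists_finsupp.1 hx
  refine ⟨c.support.sup id + 1, Nat.succ_pos _, c, ?_⟩
  refine Finsupp.sum_of_support_subset _ (fun m hm ↦ ?_) _ fun _ _ ↦ zero_smul R _
  have hle : m ≤ c.support.sup id := le_sup (f := id) hm
  exact mem_range.2 (by lia)

theorem iteratedDeriv_clm_comp_left {𝕜 X Y : Type*} [NontriviallyNormedField 𝕜]
    [NormedAddCommGroup X] [NormedSpace 𝕜 X] [NormedAddCommGroup Y] [NormedSpace 𝕜 Y]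
    (L : X →L[𝕜] Y) {F : 𝕜 → X} {x : 𝕜} {n : ℕ} (hF : ContDiffAt 𝕜 n F x) :
    iteratedDeriv n (L ∘ F) x = L (iteratedDeriv n F x) := by
  simp only [iteratedDeriv_eq_iteratedFDeriv, L.iteratedFDeriv_comp_left hF le_rfl,
    ContinuousLinearMap.compContinuousMultilinearMap_coe, Function.comp_apply]

variable {X : Type*} [NormedAddCommGroup X] [NormedSpace ℂ X] [CompleteSpace X] {U : Set ℂ}

theorem eqOn_zero_of_iteratedDeriv_eq_zero {F : ℂ → X} {a : ℂ} (hF : DifferentiableOn ℂ F U)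
    (hU : IsOpen U) (hconn : IsPreconnected U) (ha : a ∈ U) (hzero : ∀ n, iteratedDeriv n F a = 0) :
    Set.EqOn F 0 U := by
  obtain ⟨r, hr, hball⟩ := Metric.mem_nhds_iff.1 (hU.mem_nhds ha)
  refine (hF.analyticOnNhd hU).eqOn_zero_of_preconnected_of_eventuallyEq_zero hconn ha ?_
  filter_upwards [Metric.ball_mem_nhds a hr] with z hz
  simpa [hzero] using (Complex.hasSum_taylorSeries_on_ball (hF.mono hball) hz).tsum_eq.symm

theorem mem_topologicalClosure_span_iteratedDeriv {F : ℂ → X} {a b : ℂ}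
    (hF : DifferentiableOn ℂ F U) (hU : IsOpen U) (hconn : IsPreconnected U) (ha : a ∈ U)
    (hb : b ∈ U) :
    F b ∈ (Submodule.span ℂ (Set.range fun n ↦ iteratedDeriv n F a)).topologicalClosure := by
  set W := (Submodule.span ℂ (Set.range fun n ↦ iteratedDeriv n F a)).topologicalClosure
  have : IsClosed (W : Set X) := Submodule.isClosed_topologicalClosure _
  have hzero (n : ℕ) : iteratedDeriv n (W.mkQL ∘ F) a = 0 := by
    rw [iteratedDeriv_clm_comp_left _ (hF.analyticAt (hU.mem_nhds ha)).contDiffAt]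
    exact (Submodule.Quotient.mk_eq_zero W).2
      (Submodule.le_topologicalClosure _ (Submodule.subset_span ⟨n, rfl⟩))
  rw [← Submodule.Quotient.mk_eq_zero]
  exact eqOn_zero_of_iteratedDeriv_eq_zero (W.mkQL.differentiable.comp_differentiableOn hF) hU
    hconn ha hzero hb

end DerivativeSpan

section SquareIntegrable

theorem memLp_two_restrict_of_continuousOn {X E : Type*} [TopologicalSpace X]
    [TopologicalSpace.PseudoMetrizableSpace X] [MeasurableSpace X] [OpensMeasurableSpace X]
    [NormedAddCommGroup E] [SecondCountableTopologyEither X E] {μ : Measure X} {s : Set X}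
    {f : X → E} (hs : MeasurableSet s) (hf : ContinuousOn f s)
    (hf₂ : IntegrableOn (fun x ↦ ‖f x‖ ^ 2) s μ) : MemLp f 2 (μ.restrict s) :=
  (memLp_two_iff_integrable_sq_norm (hf.aestronglyMeasurable hs)).2 hf₂

theorem lpNorm_two_eq_sqrt_integral_sq_norm {X E : Type*} [MeasurableSpace X] [NormedAddCommGroup E]
    {μ : Measure X} {f : X → E} (hf : AEStronglyMeasurable f μ) :
    lpNorm f 2 μ = √(∫ x, ‖f x‖ ^ 2 ∂μ) := by
  rw [lpNorm_eq_integral_norm_rpow_toReal two_ne_zero ENNReal.ofNat_ne_top hf, Real.sqrt_eq_rpow]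
  norm_num

end SquareIntegrable

section Bergman

open Filter Topology TopologicalSpace
open scoped ENNReal

variable {Ω : Opens ℂ} {p : ℝ≥0∞} {E : Type*} [NormedAddCommGroup E] [NormedSpace ℂ E]

variable (Ω p E) in
/-- The functions `f : ℂ → E` that are holomorphic on `Ω`, have finite `L^p` norm there and vanish
off `Ω`; the last condition makes such a function determined by its restriction to `Ω`. -/
def bergmanSubmodule : Submodule ℂ (ℂ → E) where
  carrier := {f | DifferentiableOn ℂ f Ω ∧ MemLp f p (volume.restrict Ω) ∧ ∀ z ∉ Ω, f z = 0}
  add_mem' := fun ⟨hf, hfp, hf₀⟩ ⟨hg, hgp, hg₀⟩ ↦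
    ⟨hf.add hg, hfp.add hgp, fun z hz ↦ by simp [hf₀ z hz, hg₀ z hz]⟩
  zero_mem' := ⟨differentiableOn_const 0, MemLp.zero, fun _ _ ↦ rfl⟩
  smul_mem' := fun c _ ⟨hf, hfp, hf₀⟩ ↦
    ⟨hf.const_smul c, hfp.const_smul c, fun z hz ↦ by simp [hf₀ z hz]⟩

variable (Ω p E) in
/-- The Bergman space `A^p(Ω; E)` with the `L^p` norm. It is a type of its own because a submodule
of `ℂ → E` already carries the topology of pointwise convergence. -/
def BergmanSpace : Type _ := bergmanSubmodule Ω p E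

namespace BergmanSpace

instance : AddCommGroup (BergmanSpace Ω p E) :=
  inferInstanceAs (AddCommGroup (bergmanSubmodule Ω p E))

instance : Module ℂ (BergmanSpace Ω p E) := inferInstanceAs (Module ℂ (bergmanSubmodule Ω p E))

instance : FunLike (BergmanSpace Ω p E) ℂ E where
  coe := Subtype.val
  coe_injective := Subtype.val_injective

noncomputable instance : Norm (BergmanSpace Ω p E) := ⟨fun f ↦ lpNorm f p (volume.restrict Ω)⟩

theorem norm_def (f : BergmanSpace Ω p E) : ‖f‖ = lpNorm f p (volume.restrict Ω) := rfl

theorem differentiableOn (f : BergmanSpace Ω p E) : DifferentiableOn ℂ f Ω := f.2.1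

theorem memLp (f : BergmanSpace Ω p E) : MemLp f p (volume.restrict Ω) := f.2.2.1

theorem apply_eq_zero_of_notMem (f : BergmanSpace Ω p E) {z : ℂ} (hz : z ∉ Ω) : f z = 0 :=
  f.2.2.2 z hz

/-- The restriction to `Ω` of an `L^p` function holomorphic there, as an element of the Bergman
space. -/
noncomputable def ofMemLp (f : ℂ → E) (hf : DifferentiableOn ℂ f Ω)
    (hfp : MemLp f p (volume.restrict Ω)) : BergmanSpace Ω p E :=
  ⟨(Ω : Set ℂ).indicator f, hf.congr fun _ hz ↦ Set.indicator_of_mem hz f,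
    (memLp_congr_ae (indicator_ae_eq_restrict Ω.isOpen.measurableSet)).2 hfp,
    fun _ hz ↦ Set.indicator_of_notMem hz f⟩

variable {f : ℂ → E} {hf : DifferentiableOn ℂ f Ω} {hfp : MemLp f p (volume.restrict Ω)}

theorem coe_ofMemLp : ⇑(ofMemLp f hf hfp) = (Ω : Set ℂ).indicator f := rfl

theorem eqOn_ofMemLp : Set.EqOn (ofMemLp f hf hfp) f Ω := fun _ hz ↦ Set.indicator_of_mem hz f

theorem norm_ofMemLp : ‖ofMemLp f hf hfp‖ = lpNorm f p (volume.restrict Ω) := by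
  rw [norm_def, ← toReal_eLpNorm (memLp _).aestronglyMeasurable,
    ← toReal_eLpNorm hfp.aestronglyMeasurable,
    coe_ofMemLp, eLpNorm_congr_ae (indicator_ae_eq_restrict Ω.isOpen.measurableSet)]

variable [CompleteSpace E] [Fact (1 ≤ p)]

theorem exists_eventually_norm_apply_le {z : ℂ} (hz : z ∈ Ω) :
    ∃ C : ℝ, ∀ᶠ w in 𝓝 z, ∀ f : BergmanSpace Ω p E, ‖f w‖ ≤ C * ‖f‖ := by
  obtain ⟨C, hC⟩ := exists_eventually_norm_le_mul_lpNorm (E := E) Ω.isOpen (Fact.out : 1 ≤ p) hz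
  exact ⟨C, hC.mono fun w hw f ↦ hw f f.differentiableOn f.memLp⟩

theorem exists_norm_apply_le (z : ℂ) : ∃ C : ℝ, ∀ f : BergmanSpace Ω p E, ‖f z‖ ≤ C * ‖f‖ := by
  by_cases hz : z ∈ Ω
  · obtain ⟨C, hC⟩ := exists_eventually_norm_apply_le (p := p) (E := E) hz
    exact ⟨C, hC.self_of_nhds⟩
  · exact ⟨0, fun f ↦ by simp [f.apply_eq_zero_of_notMem hz]⟩

theorem normedSpaceCore : NormedSpace.Core ℂ (BergmanSpace Ω p E) where
  norm_nonneg _ := lpNorm_nonneg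
  norm_smul c f := lpNorm_const_smul c f _
  norm_triangle f _ := lpNorm_add_le f.memLp (Fact.out : 1 ≤ p)
  norm_eq_zero_iff f := by
    refine ⟨fun hf ↦ DFunLike.ext f 0 fun z ↦ ?_, fun hf ↦ hf ▸ lpNorm_zero p _⟩
    obtain ⟨C, hC⟩ := exists_norm_apply_le (Ω := Ω) (p := p) (E := E) z
    exact norm_le_zero_iff.1 ((hC f).trans_eq (by rw [hf, mul_zero]))

noncomputable instance : NormedAddCommGroup (BergmanSpace Ω p E) := .ofCore normedSpaceCore

noncomputable instance : NormedSpace ℂ (BergmanSpace Ω p E) := .ofCore normedSpaceCore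

variable (Ω p E) in
/-- Evaluation at `z` as a bounded operator on the Bergman space. -/
noncomputable def eval (z : ℂ) : BergmanSpace Ω p E →L[ℂ] E :=
  LinearMap.mkContinuousOfExistsBound
    { toFun f := f z, map_add' _ _ := rfl, map_smul' _ _ := rfl } (exists_norm_apply_le z)

theorem eval_apply (z : ℂ) (f : BergmanSpace Ω p E) : eval Ω p E z f = f z := rfl

theorem differentiableOn_eval : DifferentiableOn ℂ (eval Ω p E) Ω := by
  refine differentiableOn_of_forall_differentiableOn_apply Ω.isOpen differentiableOn fun z hz ↦ ?_
  obtain ⟨C, hC⟩ := exists_eventually_norm_apply_le (p := p) (E := E) hz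
  refine isBoundedUnder_of_eventually_le (a := max C 0) (hC.mono fun w hw ↦ ?_)
  exact ContinuousLinearMap.opNorm_le_bound _ (le_max_right C 0) fun f ↦
    (hw f).trans (by gcongr; exact le_max_left C 0)

theorem iteratedDeriv_eval_apply {z : ℂ} (hz : z ∈ Ω) (n : ℕ) (f : BergmanSpace Ω p E) :
    iteratedDeriv n (eval Ω p E) z f = iteratedDeriv n f z :=
  (iteratedDeriv_clm_comp_left (ContinuousLinearMap.apply ℂ E f)
    (differentiableOn_eval.analyticAt (Ω.isOpen.mem_nhds hz)).contDiffAt).symm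

theorem eval_mem_topologicalClosure_span_iteratedDeriv {a b : ℂ}
    (hΩ : IsPreconnected (Ω : Set ℂ)) (ha : a ∈ Ω) (hb : b ∈ Ω) :
    eval Ω p E b ∈ (Submodule.span ℂ
      (Set.range fun n ↦ iteratedDeriv n (eval Ω p E) a)).topologicalClosure :=
  mem_topologicalClosure_span_iteratedDeriv differentiableOn_eval Ω.isOpen hΩ ha hb

end BergmanSpace

theorem approximate_null_quadrature_general {Ω : Set ℂ} {p : ℝ≥0∞} (hp : 1 ≤ p)
    {E : Type*} [NormedAddCommGroup E] [NormedSpace ℂ E] [CompleteSpace E]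
    (hΩopen : IsOpen Ω) (hΩconn : IsPreconnected Ω) {a b : ℂ} (ha : a ∈ Ω) (hb : b ∈ Ω)
    {ε : ℝ} (hε : 0 < ε) :
    ∃ N : ℕ, 0 < N ∧ ∃ c : ℕ → ℂ, ∀ h : ℂ → E, DifferentiableOn ℂ h Ω →
      MemLp h p (volume.restrict Ω) →
        ‖h b - ∑ m ∈ range (N + 1), (starRingEnd ℂ) (c m) • iteratedDeriv m h a‖
          ≤ ε * lpNorm h p (volume.restrict Ω) := by
  lift Ω to Opens ℂ using hΩopen
  have : Fact (1 ≤ p) := ⟨hp⟩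
  obtain ⟨T, hT, hclose⟩ := Metric.mem_closure_iff.1
    (BergmanSpace.eval_mem_topologicalClosure_span_iteratedDeriv (p := p) (E := E) hΩconn ha hb)
    ε hε
  obtain ⟨N, hN, c, rfl⟩ := exists_eq_sum_range_smul_of_mem_span_range hT
  refine ⟨N, hN, fun m ↦ (starRingEnd ℂ) (c m), fun h hh hhp ↦ ?_⟩
  let g : BergmanSpace Ω p E := .ofMemLp h hh hhp
  have hgh : Set.EqOn g h Ω := BergmanSpace.eqOn_ofMemLp
  rw [dist_eq_norm] at hclose
  have bound := ContinuousLinearMap.le_of_opNorm_le _ hclose.le g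
  have iteratedDeriv_eq (m : ℕ) : iteratedDeriv m g a = iteratedDeriv m h a :=
    (hgh.eventuallyEq_of_mem (Ω.isOpen.mem_nhds ha)).iteratedDeriv_eq m
  simpa [BergmanSpace.eval_apply, BergmanSpace.iteratedDeriv_eval_apply ha, iteratedDeriv_eq,
    hgh hb, g, BergmanSpace.norm_ofMemLp] using bound

end Bergman

/-- Approximate null quadrature identity: on a bounded domain `Ω ⊆ ℂ` with
`a, b ∈ Ω`, for every `ε > 0` there are `N` and complex constants `c_0, …, c_N`
such that every square-integrable holomorphic `h` on `Ω` satisfies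
`|h(b) − Σ_{m=0}^N conj(c_m) h^{(m)}(a)| ≤ ε ‖h‖_{L²(Ω)}`. -/
theorem approximate_null_quadrature
    (Ω : Set ℂ) (hΩopen : IsOpen Ω) (hΩconn : IsConnected Ω)
    (hΩbdd : Bornology.IsBounded Ω)
    (a b : ℂ) (ha : a ∈ Ω) (hb : b ∈ Ω)
    (ε : ℝ) (hε : 0 < ε) :
    ∃ N : ℕ, 0 < N ∧ ∃ c : ℕ → ℂ,
      ∀ h : ℂ → ℂ, DifferentiableOn ℂ h Ω →
        IntegrableOn (fun z => ‖h z‖ ^ 2) Ω volume →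
        ‖h b - ∑ m ∈ Finset.range (N + 1),
            (starRingEnd ℂ) (c m) * iteratedDeriv m h a‖
          ≤ ε * Real.sqrt (∫ z in Ω, ‖h z‖ ^ 2) := by
  obtain ⟨N, hN, c, hc⟩ := approximate_null_quadrature_general (p := 2) (E := ℂ) one_le_two
    hΩopen hΩconn.isPreconnected ha hb hε
  refine ⟨N, hN, c, fun h hh hh₂ ↦ ?_⟩
  have memLp := memLp_two_restrict_of_continuousOn hΩopen.measurableSet hh.continuousOn hh₂
  exact lpNorm_two_eq_sqrt_integral_sq_norm memLp.aestronglyMeasurable ▸ hc h hh memLp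
end
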